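/- (Corollary 1 of the paper.) Let m ≥ 1, d = 2m, let J = [[0, I_m], [−I_m, 0]] be the canonical skew-symmetric matrix, let H : ℝ^d → ℝ be C^∞, and let y : [0, h₀] → ℝ^d solve y' = J∇H(y), y(0) = y₀. Let s > ν ≥ 1 and suppose that for every h ∈ (0, h₀] there is a polynomial map σ_h : ℝ → ℝ^d of degree ≤ s with σ_h(0) = y₀ and σ_h'(ch) = Σ_{j=0}^{s−1} P_j(c) γ_j(h) for all c ∈ [0,1], where γ_j(h) = η_j(h) · J ∫₀¹ P_j(τ) ∇H(σ_h(τh)) dτ, with η_j(h) = 1 for 0 ≤ j ≤ s−ν−1 and η_j(h) = 1 − h^{2(s−1−j)} α_j(h) for s−ν ≤ j ≤ s−1, where each α_j(h) is O(h²). Assume moreover that σ_h([0, h]) is contained in a fixed compact set for all h ∈ (0, h₀]. Then ‖σ_h(h) − y(h)‖ = O(h^{2s+1}) as h → 0⁺. -/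

import Mathlib

open MeasureTheory Polynomial

/-- The shifted Legendre polynomial `P j`, orthonormal on `[0,1]`. -/
noncomputable def legP (j : ℕ) : ℝ → ℝ := fun x =>
  (Real.sqrt (2 * j + 1) / (Nat.factorial j)) *
    (Polynomial.derivative^[j] ((Polynomial.X ^ 2 - Polynomial.X) ^ j)).eval x

/-- The phase space `ℝ^{2m}`, with coordinates indexed by `Fin m ⊕ Fin m` (positions ⊕ momenta). -/
abbrev ESp (m : ℕ) := EuclideanSpace ℝ (Fin m ⊕ Fin m)

/-- The canonical skew-symmetric matrix `J = [[0, I_m], [-I_m, 0]]`. -/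
noncomputable def Jmat (m : ℕ) : Matrix (Fin m ⊕ Fin m) (Fin m ⊕ Fin m) ℝ :=
  Matrix.fromBlocks 0 1 (-1) 0


lemma beta_int (b : ℕ) : ∀ a : ℕ, ∫ x in (0:ℝ)..1, x ^ a * (1 - x) ^ b =
    (a.factorial * b.factorial : ℝ) / ((a + b + 1).factorial : ℝ) := by
  induction b with
  | zero =>
    intro a
    simp only [pow_zero, mul_one, integral_pow, Nat.factorial_zero, Nat.cast_one, add_zero]
    rw [Nat.factorial_succ]
    have := Nat.factorial_pos a
    push_cast
    field_simp
    simp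
  | succ b ih =>
    intro a
    have hparts := intervalIntegral.integral_mul_deriv_eq_deriv_mul (a := (0:ℝ)) (b := 1)
      (u := fun x : ℝ => (1 - x) ^ (b + 1)) (u' := fun x => -((b + 1 : ℝ) * (1 - x) ^ b))
      (v := fun x : ℝ => x ^ (a + 1) / (a + 1)) (v' := fun x => x ^ a)
      (by
        intro x _
        have := ((hasDerivAt_id' x).const_sub 1).fun_pow (b + 1)
        refine this.congr_deriv ?_
        simp)
      (by
        intro x _
        have := (hasDerivAt_pow (a + 1) x).div_const (a + 1 : ℝ)
        refine this.congr_deriv ?_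
        push_cast
        field_simp)
      (by apply Continuous.intervalIntegrable; fun_prop)
      (by apply Continuous.intervalIntegrable; fun_prop)
    have e1 : ∫ x in (0:ℝ)..1, x ^ a * (1 - x) ^ (b + 1) =
        ∫ x in (0:ℝ)..1, (1 - x) ^ (b + 1) * x ^ a := by
      congr 1; ext x; ring
    have e2 : ∫ x in (0:ℝ)..1, -((b + 1 : ℝ) * (1 - x) ^ b) * (x ^ (a + 1) / (a + 1)) =
        (-((b + 1 : ℝ) / (a + 1))) * ∫ x in (0:ℝ)..1, x ^ (a + 1) * (1 - x) ^ b := by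
      rw [← intervalIntegral.integral_const_mul]
      congr 1; ext x; ring
    rw [e1, hparts, e2, ih]
    have h3 : a + 1 + b + 1 = a + (b + 1) + 1 := by ring
    rw [h3, Nat.factorial_succ a, Nat.factorial_succ b]
    have := Nat.factorial_pos (a + (b + 1) + 1)
    push_cast
    simp
    field_simp

/-- the kernel polynomial -/
noncomputable def wP (j : ℕ) : ℝ[X] := (X ^ 2 - X) ^ j

lemma wP_int (j : ℕ) : ∫ x in (0:ℝ)..1, (wP j).eval x =
    (-1) ^ j * ((j.factorial * j.factorial : ℝ) / ((j + j + 1).factorial : ℝ)) := by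
  rw [← beta_int, ← intervalIntegral.integral_const_mul]
  congr 1; ext x
  simp only [wP, eval_pow, eval_sub, eval_X]
  rw [← mul_pow, ← mul_pow]
  congr 1; ring

lemma wP_zero {j i : ℕ} (h : i < j) {x : ℝ} (hx : x ^ 2 - x = 0) :
    (derivative^[i] (wP j)).eval x = 0 := by
  obtain ⟨q, hq⟩ := pow_sub_dvd_iterate_derivative_pow (X ^ 2 - X : ℝ[X]) j i
  rw [wP, hq]
  simp only [eval_mul, eval_pow, eval_sub, eval_X, hx]
  rw [zero_pow (by omega), zero_mul]

lemma poly_parts (p q : ℝ[X]) (h0 : p.eval 0 = 0) (h1 : p.eval 1 = 0) :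
    ∫ x in (0:ℝ)..1, (derivative p).eval x * q.eval x =
      - ∫ x in (0:ℝ)..1, p.eval x * (derivative q).eval x := by
  have := intervalIntegral.integral_mul_deriv_eq_deriv_mul (a := (0:ℝ)) (b := 1)
      (u := fun x : ℝ => p.eval x) (u' := fun x => (derivative p).eval x)
      (v := fun x : ℝ => q.eval x) (v' := fun x => (derivative q).eval x)
      (fun x _ => p.hasDerivAt x) (fun x _ => q.hasDerivAt x)
      (by apply Continuous.intervalIntegrable; fun_prop)
      (by apply Continuous.intervalIntegrable; fun_prop)
  rw [this, h0, h1]; simp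

lemma wP_parts (j : ℕ) (q : ℝ[X]) : ∀ k ≤ j,
    ∫ x in (0:ℝ)..1, (derivative^[j] (wP j)).eval x * q.eval x =
      (-1) ^ k * ∫ x in (0:ℝ)..1, (derivative^[j - k] (wP j)).eval x * (derivative^[k] q).eval x := by
  intro k
  induction k with
  | zero => intro _; simp
  | succ k ih =>
    intro hk
    rw [ih (by omega)]
    have e : j - k = (j - (k + 1)) + 1 := by omega
    rw [e, Function.iterate_succ_apply', poly_parts _ _ (wP_zero (by omega) (by norm_num))
      (wP_zero (by omega) (by norm_num)), Function.iterate_succ_apply']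
    ring

/-- the shifted Legendre polynomial as a polynomial -/
noncomputable def LP (j : ℕ) : ℝ[X] :=
  C (Real.sqrt (2 * j + 1) / (Nat.factorial j)) * derivative^[j] (wP j)

lemma legP_eq (j : ℕ) (x : ℝ) : legP j x = (LP j).eval x := by
  simp [legP, LP, wP]

lemma LP_int (j : ℕ) (q : ℝ[X]) (hq : q.natDegree ≤ j) :
    ∫ x in (0:ℝ)..1, (LP j).eval x * q.eval x =
      (Real.sqrt (2 * j + 1) / (Nat.factorial j)) * (j.factorial * q.coeff j) *
       ((j.factorial * j.factorial : ℝ) / ((j + j + 1).factorial : ℝ)) := by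
  have hc : derivative^[j] q = C (j.factorial * q.coeff j : ℝ) := by
    have : (derivative^[j] q).natDegree ≤ 0 := by
      have := natDegree_iterate_derivative q j
      omega
    rw [eq_C_of_natDegree_le_zero this, coeff_iterate_derivative]
    simp [Nat.descFactorial_self]
  have e : ∀ x, (LP j).eval x * q.eval x = (Real.sqrt (2 * j + 1) / (Nat.factorial j)) *
      ((derivative^[j] (wP j)).eval x * q.eval x) := by
    intro x; simp [LP]; ring
  simp_rw [e]
  rw [intervalIntegral.integral_const_mul, wP_parts j q j le_rfl, hc]
  simp only [Nat.sub_self, Function.iterate_zero, id, eval_C]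
  rw [intervalIntegral.integral_mul_const, wP_int]
  have : ((-1:ℝ) ^ j) * (-1) ^ j = 1 := by rw [← mul_pow]; simp
  linear_combination (Real.sqrt (2 * j + 1) / (Nat.factorial j)) * (j.factorial * q.coeff j) *
       ((j.factorial * j.factorial : ℝ) / ((j + j + 1).factorial : ℝ)) * this

lemma wP_natDegree (j : ℕ) : (wP j).natDegree = 2 * j := by
  have h : (X ^ 2 - X : ℝ[X]).natDegree = 2 := by compute_degree!
  rw [wP, natDegree_pow, h]; ring

lemma wP_coeff (j : ℕ) : (wP j).coeff (2 * j) = 1 := by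
  have h : (X ^ 2 - X : ℝ[X]).Monic := by monicity!
  have := (h.pow j).coeff_natDegree
  rw [← wP_natDegree]; exact this

lemma LP_natDegree (j : ℕ) : (LP j).natDegree ≤ j := by
  unfold LP
  refine (natDegree_C_mul_le _ _).trans ?_
  have := natDegree_iterate_derivative (wP j) j
  rw [wP_natDegree] at this
  omega

lemma LP_coeff (j : ℕ) : (LP j).coeff j =
    (Real.sqrt (2 * j + 1) / (Nat.factorial j)) * ((2 * j).factorial / j.factorial) := by
  unfold LP
  rw [coeff_C_mul, coeff_iterate_derivative, ← two_mul, wP_coeff]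
  congr 1
  have := Nat.factorial_mul_descFactorial (n := 2 * j) (k := j) (by omega)
  rw [show 2 * j - j = j by omega] at this
  have hp : (j.factorial : ℝ) ≠ 0 := by positivity
  rw [eq_div_iff hp, ← this]
  push_cast
  simp; ring

lemma LP_coeff_ne (j : ℕ) : (LP j).coeff j ≠ 0 := by
  rw [LP_coeff]; positivity

lemma LP_orth (j : ℕ) (q : ℝ[X]) (hq : q.natDegree < j) :
    ∫ x in (0:ℝ)..1, (LP j).eval x * q.eval x = 0 := by
  rw [LP_int j q hq.le, coeff_eq_zero_of_natDegree_lt hq]; simp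

lemma LP_norm (j : ℕ) : ∫ x in (0:ℝ)..1, (LP j).eval x * (LP j).eval x = 1 := by
  rw [LP_int j _ (LP_natDegree j), LP_coeff]
  have hp : (j.factorial : ℝ) ≠ 0 := by positivity
  have hp2 : ((2 * j).factorial : ℝ) ≠ 0 := by positivity
  have hs : Real.sqrt (2 * j + 1) * Real.sqrt (2 * j + 1) = 2 * j + 1 :=
    Real.mul_self_sqrt (by positivity)
  have hs' : Real.sqrt (2 * j + 1) ^ 2 = 2 * j + 1 := by rw [sq, hs]
  rw [show j + j + 1 = 2 * j + 1 by ring, Nat.factorial_succ]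
  push_cast
  have h3 : (2 * j + 1 : ℝ) ≠ 0 := by positivity
  field_simp
  rw [hs']

lemma LP_orthonormal (i j : ℕ) : ∫ x in (0:ℝ)..1, (LP j).eval x * (LP i).eval x =
    if i = j then 1 else 0 := by
  rcases lt_trichotomy i j with h | h | h
  · rw [if_neg h.ne, LP_orth]
    exact lt_of_le_of_lt (LP_natDegree i) h
  · subst h; simp [LP_norm]
  · rw [if_neg h.ne']
    simp_rw [mul_comm ((LP j).eval _)]
    rw [LP_orth]
    exact lt_of_le_of_lt (LP_natDegree j) h

lemma LP_proj_aux (s : ℕ) : ∀ n ≤ s, ∀ q : ℝ[X], q.degree < n → ∀ x : ℝ,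
    ∑ j ∈ Finset.range s, (LP j).eval x * (∫ t in (0:ℝ)..1, (LP j).eval t * q.eval t) = q.eval x := by
  intro n
  induction n with
  | zero =>
    intro _ q hq x
    have : q = 0 := by
      rw [← degree_eq_bot]
      simpa using hq
    simp [this]
  | succ n ih =>
    intro hn q hq x
    set a := q.coeff n / (LP n).coeff n with ha
    have hlin : ∀ j, ∫ t in (0:ℝ)..1, (LP j).eval t * q.eval t =
        (∫ t in (0:ℝ)..1, (LP j).eval t * (q - C a * LP n).eval t) +
        a * ∫ t in (0:ℝ)..1, (LP j).eval t * (LP n).eval t := by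
      intro j
      rw [← intervalIntegral.integral_const_mul, ← intervalIntegral.integral_add]
      · congr 1; ext t; simp; ring
      · apply Continuous.intervalIntegrable; fun_prop
      · apply Continuous.intervalIntegrable; fun_prop
    have hd : (q - C a * LP n).degree < n := by
      rw [degree_lt_iff_coeff_zero] at hq ⊢
      intro m hm
      rcases hm.eq_or_lt with h | h
      · subst h
        have := LP_coeff_ne n
        simp [ha]
        field_simp
        simp
      · rw [coeff_sub, coeff_C_mul, hq m (by exact_mod_cast h),
          coeff_eq_zero_of_natDegree_lt (lt_of_le_of_lt (LP_natDegree n) h)]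
        simp
    have h1 := ih (by omega) _ hd x
    simp_rw [hlin, mul_add, Finset.sum_add_distrib]
    rw [h1]
    simp_rw [LP_orthonormal]
    simp [show n < s by omega]
    ring

lemma legP_cont (j : ℕ) : Continuous (legP j) := by
  have : legP j = fun x => (LP j).eval x := funext (legP_eq j)
  rw [this]; fun_prop

lemma legP_proj (s i : ℕ) (hi : i < s) (x : ℝ) :
    ∑ j ∈ Finset.range s, legP j x * (∫ t in (0:ℝ)..1, legP j t * t ^ i) = x ^ i := by
  have := LP_proj_aux s s le_rfl (X ^ i) (by rw [degree_X_pow]; exact_mod_cast hi) x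
  simpa [legP_eq] using this

lemma legP_orth (i j : ℕ) (hi : i < j) : ∫ t in (0:ℝ)..1, legP j t * t ^ i = 0 := by
  have := LP_orth j (X ^ i) (by simpa using hi)
  simpa [legP_eq] using this

lemma legP_orthonormal (i j : ℕ) : ∫ t in (0:ℝ)..1, legP j t * legP i t = if i = j then 1 else 0 := by
  have := LP_orthonormal i j
  simpa [legP_eq] using this

lemma legP_contDiff (j : ℕ) : ContDiff ℝ (⊤ : ℕ∞) (legP j) := by
  have : legP j = fun x => (LP j).eval x := funext (legP_eq j)
  rw [this]; simpa using (LP j).contDiff_aeval (𝕜 := ℝ) (⊤ : ℕ∞)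

lemma poly_iteratedDeriv (p : ℝ[X]) (k : ℕ) :
    iteratedDeriv k (fun x => p.eval x) = fun x => (derivative^[k] p).eval x := by
  induction k with
  | zero => simp
  | succ k ih =>
    rw [iteratedDeriv_succ, ih, Function.iterate_succ_apply']
    ext x; simp

lemma legP_iteratedDeriv_zero (j k : ℕ) (h : j < k) : iteratedDeriv k (legP j) = fun _ => 0 := by
  have : legP j = fun x => (LP j).eval x := funext (legP_eq j)
  rw [this, poly_iteratedDeriv, iterate_derivative_eq_zero (lt_of_le_of_lt (LP_natDegree j) h)]
  simp

lemma legP_deriv_bound (k s : ℕ) : ∃ C : ℝ, 0 ≤ C ∧ ∀ j < s, ∀ x ∈ Set.Icc (0:ℝ) 1,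
    |iteratedDeriv k (legP j) x| ≤ C := by
  have h : ∀ j, ∃ C : ℝ, ∀ x ∈ Set.Icc (0:ℝ) 1, ‖iteratedDeriv k (legP j) x‖ ≤ C := fun j =>
    isCompact_Icc.exists_bound_of_continuousOn
      ((legP_contDiff j).continuous_iteratedDeriv k (by exact_mod_cast le_top)).continuousOn
  choose C hC using h
  refine ⟨∑ j ∈ Finset.range s, |C j|, by positivity, fun j hj x hx => ?_⟩
  refine ((hC j x hx).trans (le_abs_self _)).trans ?_
  exact Finset.single_le_sum (f := fun j => |C j|) (fun _ _ => abs_nonneg _) (Finset.mem_range.2 hj)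


section analysis
variable {F : Type*} [NormedAddCommGroup F] [NormedSpace ℝ F]

lemma mvt_zero {φ φ' : ℝ → F} {T C : ℝ} {k : ℕ} (hC : 0 ≤ C) (h0 : φ 0 = 0)
    (hd : ∀ t ∈ Set.Icc 0 T, HasDerivAt φ (φ' t) t)
    (hb : ∀ t ∈ Set.Icc 0 T, ‖φ' t‖ ≤ C * t ^ k) :
    ∀ t ∈ Set.Icc 0 T, ‖φ t‖ ≤ C * t ^ (k + 1) := by
  intro t ht
  have := Convex.norm_image_sub_le_of_norm_hasDerivWithin_le (f := φ) (f' := φ')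
    (s := Set.Icc 0 t) (x := 0) (y := t) (C := C * t ^ k)
    (fun x hx => (hd x ⟨hx.1, hx.2.trans ht.2⟩).hasDerivWithinAt)
    (fun x hx => (hb x ⟨hx.1, hx.2.trans ht.2⟩).trans (by
      have := hx.1
      have := hx.2
      gcongr)) (convex_Icc 0 t) ⟨le_rfl, ht.1⟩ ⟨ht.1, le_rfl⟩
  rw [h0, sub_zero, sub_zero, Real.norm_eq_abs, abs_of_nonneg ht.1] at this
  rw [pow_succ, ← mul_assoc]; exact this

lemma taylor_approx (n : ℕ) : ∀ (g : ℝ → F) (_ : ContDiff ℝ (⊤ : ℕ∞) g) (M : ℝ)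
    (_ : ∀ c ∈ Set.Icc (0:ℝ) 1, ‖iteratedDeriv n g c‖ ≤ M),
    ∃ B : ℕ → F, ∀ c ∈ Set.Icc (0:ℝ) 1, ‖g c - ∑ i ∈ Finset.range n, c ^ i • B i‖ ≤ M := by
  induction n with
  | zero => intro g hg M hM; exact ⟨0, by simpa using hM⟩
  | succ n ih =>
    intro g hg M hM
    have hM0 : 0 ≤ M := (norm_nonneg _).trans (hM 0 (by simp))
    have hg' := contDiff_infty_iff_deriv.1 hg
    obtain ⟨B, hB⟩ := ih (deriv g) hg'.2 M (by simpa [iteratedDeriv_succ'] using hM)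
    let B' : ℕ → F := fun i => match i with
      | 0 => g 0
      | i + 1 => ((i : ℝ) + 1)⁻¹ • B i
    refine ⟨B', fun c hc => ?_⟩
    have := mvt_zero (φ := fun c => g c - ∑ i ∈ Finset.range (n + 1), c ^ i • B' i)
      (φ' := fun c => deriv g c - ∑ i ∈ Finset.range n, c ^ i • B i) (T := 1) (C := M) (k := 0)
      hM0 (by simp [Finset.sum_range_succ', B'])
      (by
        intro t _
        refine (hg'.1 t).hasDerivAt.sub ?_
        simp only [Finset.sum_range_succ']
        have h1 : HasDerivAt (fun c : ℝ => ∑ i ∈ Finset.range n, c ^ (i + 1) • B' (i + 1))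
            (∑ i ∈ Finset.range n, t ^ i • B i) t := by
          apply HasDerivAt.fun_sum
          intro i _
          have := (hasDerivAt_pow (i + 1) t).smul_const (B' (i + 1))
          refine this.congr_deriv ?_
          simp only [B', smul_smul]
          congr 1
          push_cast
          have : (i : ℝ) + 1 ≠ 0 := by positivity
          field_simp
        have h2 := h1.add_const ((fun c : ℝ => c ^ 0 • B' 0) 0)
        simpa using h2)
      (by simpa using hB) c hc
    refine this.trans ?_
    have : c ^ (0 + 1) ≤ 1 := by simpa using hc.2
    nlinarith

variable [CompleteSpace F]

lemma int_bound {g : ℝ → F} {M : ℝ} (h : ∀ c ∈ Set.Icc (0:ℝ) 1, ‖g c‖ ≤ M) :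
    ‖∫ c in (0:ℝ)..1, g c‖ ≤ M := by
  have := intervalIntegral.norm_integral_le_of_norm_le_const (a := (0:ℝ)) (b := 1) (f := g) (C := M)
    (fun x hx => h x (by
      rw [Set.uIoc_of_le zero_le_one] at hx
      exact ⟨hx.1.le, hx.2⟩))
  simpa using this

lemma int_legP_poly (j n : ℕ) (B : ℕ → F) :
    ∫ c in (0:ℝ)..1, legP j c • ∑ i ∈ Finset.range n, c ^ i • B i =
      ∑ i ∈ Finset.range n, (∫ c in (0:ℝ)..1, legP j c * c ^ i) • B i := by
  have hc := legP_cont j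
  simp_rw [Finset.smul_sum, smul_smul]
  rw [intervalIntegral.integral_finsetSum]
  · simp_rw [intervalIntegral.integral_smul_const]
  · intro i _
    apply Continuous.intervalIntegrable; fun_prop

lemma orth_est {j k : ℕ} (hkj : k ≤ j) {Cp M : ℝ} (hCp : 0 ≤ Cp)
    (hp : ∀ x ∈ Set.Icc (0:ℝ) 1, |legP j x| ≤ Cp)
    {g : ℝ → F} (hg : Continuous g) {B : ℕ → F}
    (hB : ∀ c ∈ Set.Icc (0:ℝ) 1, ‖g c - ∑ i ∈ Finset.range k, c ^ i • B i‖ ≤ M) :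
    ‖∫ c in (0:ℝ)..1, legP j c • g c‖ ≤ Cp * M := by
  have hc := legP_cont j
  have h0 : ∫ c in (0:ℝ)..1, legP j c • ∑ i ∈ Finset.range k, c ^ i • B i = 0 := by
    rw [int_legP_poly]
    apply Finset.sum_eq_zero
    intro i hi
    rw [legP_orth i j (by simp at hi; omega), zero_smul]
  have : ∫ c in (0:ℝ)..1, legP j c • g c =
      ∫ c in (0:ℝ)..1, legP j c • (g c - ∑ i ∈ Finset.range k, c ^ i • B i) := by
    simp_rw [smul_sub]
    rw [intervalIntegral.integral_sub, h0, sub_zero]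
    · apply Continuous.intervalIntegrable; fun_prop
    · apply Continuous.intervalIntegrable; fun_prop
  rw [this]
  apply int_bound
  intro c hc
  rw [norm_smul]
  exact mul_le_mul (hp c hc) (hB c hc) (norm_nonneg _) hCp

/-- the projection remainder -/
noncomputable def rem (s : ℕ) (g : ℝ → F) (c : ℝ) : F :=
  g c - ∑ j ∈ Finset.range s, legP j c • ∫ t in (0:ℝ)..1, legP j t • g t

lemma rem_cont (s : ℕ) {g : ℝ → F} (hg : Continuous g) : Continuous (rem s g) := by
  unfold rem
  have := legP_cont
  fun_prop

lemma rem_est {s : ℕ} {Cp M : ℝ} (hCp : 0 ≤ Cp)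
    (hp : ∀ j < s, ∀ x ∈ Set.Icc (0:ℝ) 1, |legP j x| ≤ Cp)
    {g : ℝ → F} (hg : Continuous g) {B : ℕ → F}
    (hB : ∀ c ∈ Set.Icc (0:ℝ) 1, ‖g c - ∑ i ∈ Finset.range s, c ^ i • B i‖ ≤ M) :
    ∀ c ∈ Set.Icc (0:ℝ) 1, ‖rem s g c‖ ≤ (1 + s * (Cp * Cp)) * M := by
  intro c hc
  have hcont := legP_cont
  have hM : 0 ≤ M := (norm_nonneg _).trans (hB c hc)
  set p : ℝ → F := fun c => ∑ i ∈ Finset.range s, c ^ i • B i with hpdef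
  have hpc : Continuous p := by fun_prop
  have hproj : ∑ j ∈ Finset.range s, legP j c • ∫ t in (0:ℝ)..1, legP j t • p t = p c := by
    simp only [hpdef]
    simp_rw [int_legP_poly, Finset.smul_sum]
    rw [Finset.sum_comm]
    apply Finset.sum_congr rfl
    intro i hi
    simp_rw [smul_smul]
    rw [← Finset.sum_smul, legP_proj s i (Finset.mem_range.1 hi)]
  have e : rem s g c = (g c - p c) -
      ∑ j ∈ Finset.range s, legP j c • ∫ t in (0:ℝ)..1, legP j t • (g t - p t) := by
    have : ∀ j, ∫ t in (0:ℝ)..1, legP j t • (g t - p t) =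
        (∫ t in (0:ℝ)..1, legP j t • g t) - ∫ t in (0:ℝ)..1, legP j t • p t := by
      intro j
      have := hcont j
      simp_rw [smul_sub]
      rw [intervalIntegral.integral_sub]
      · apply Continuous.intervalIntegrable; fun_prop
      · apply Continuous.intervalIntegrable; fun_prop
    simp_rw [this, smul_sub, Finset.sum_sub_distrib]
    rw [hproj, rem]; abel
  rw [e]
  have h2 : ‖∑ j ∈ Finset.range s, legP j c • ∫ t in (0:ℝ)..1, legP j t • (g t - p t)‖
      ≤ ∑ j ∈ Finset.range s, Cp * (Cp * M) := by
    apply norm_sum_le_of_le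
    intro j hj
    have hj := Finset.mem_range.1 hj
    rw [norm_smul]
    apply mul_le_mul (hp j hj c hc) _ (norm_nonneg _) hCp
    apply int_bound
    intro t ht
    rw [norm_smul]
    exact mul_le_mul (hp j hj t ht) (hB t ht) (norm_nonneg _) hCp
  rw [Finset.sum_const, Finset.card_range, nsmul_eq_mul] at h2
  refine (norm_sub_le _ _).trans ?_
  have := hB c hc
  linarith

lemma rem_orth_legP {s l : ℕ} (hl : l < s) {g : ℝ → F} (hg : Continuous g) :
    ∫ c in (0:ℝ)..1, legP l c • rem s g c = 0 := by
  have hcont := legP_cont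
  unfold rem
  simp_rw [smul_sub, Finset.smul_sum, smul_smul]
  rw [intervalIntegral.integral_sub, intervalIntegral.integral_finsetSum]
  · simp_rw [intervalIntegral.integral_smul_const, legP_orthonormal]
    simp [hl]
  · intro i _
    apply Continuous.intervalIntegrable; fun_prop
  · apply Continuous.intervalIntegrable; fun_prop
  · apply Continuous.intervalIntegrable; fun_prop

lemma rem_orth_pow {s i : ℕ} (hi : i < s) {g : ℝ → F} (hg : Continuous g) :
    ∫ c in (0:ℝ)..1, c ^ i • rem s g c = 0 := by
  have hcont := legP_cont
  have hr := rem_cont s hg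
  have : ∀ c : ℝ, c ^ i • rem s g c = ∑ j ∈ Finset.range s,
      (∫ t in (0:ℝ)..1, legP j t * t ^ i) • (legP j c • rem s g c) := by
    intro c
    conv_lhs => rw [← legP_proj s i hi c, Finset.sum_smul]
    simp_rw [smul_smul, mul_comm]
  simp_rw [this]
  rw [intervalIntegral.integral_finsetSum]
  · apply Finset.sum_eq_zero
    intro j hj
    rw [intervalIntegral.integral_smul, rem_orth_legP (Finset.mem_range.1 hj) hg, smul_zero]
  · intro i _
    apply Continuous.intervalIntegrable; fun_prop

lemma rem_weighted {s : ℕ} {M M' : ℝ} {g : ℝ → F} (hg : Continuous g)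
    (hR : ∀ c ∈ Set.Icc (0:ℝ) 1, ‖rem s g c‖ ≤ M)
    {W : ℝ → F →L[ℝ] F} (hW : Continuous W) {B : ℕ → F →L[ℝ] F}
    (hB : ∀ c ∈ Set.Icc (0:ℝ) 1, ‖W c - ∑ i ∈ Finset.range s, c ^ i • B i‖ ≤ M') :
    ‖∫ c in (0:ℝ)..1, W c (rem s g c)‖ ≤ M' * M := by
  have hr := rem_cont s hg
  have h0 : ∫ c in (0:ℝ)..1, (∑ i ∈ Finset.range s, c ^ i • B i) (rem s g c) = 0 := by
    have : ∀ c : ℝ, (∑ i ∈ Finset.range s, c ^ i • B i) (rem s g c) =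
        ∑ i ∈ Finset.range s, B i (c ^ i • rem s g c) := by
      intro c; simp
    simp_rw [this]
    rw [intervalIntegral.integral_finsetSum]
    · apply Finset.sum_eq_zero
      intro i hi
      rw [ContinuousLinearMap.intervalIntegral_comp_comm, rem_orth_pow (Finset.mem_range.1 hi) hg,
        map_zero]
      apply Continuous.intervalIntegrable; fun_prop
    · intro i _
      apply Continuous.intervalIntegrable; fun_prop
  have : ∫ c in (0:ℝ)..1, W c (rem s g c) =
      ∫ c in (0:ℝ)..1, (W c - ∑ i ∈ Finset.range s, c ^ i • B i) (rem s g c) := by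
    simp_rw [sub_apply]
    rw [intervalIntegral.integral_sub, h0, sub_zero]
    · apply Continuous.intervalIntegrable; fun_prop
    · apply Continuous.intervalIntegrable; fun_prop
  rw [this]
  apply int_bound
  intro c hc
  refine (ContinuousLinearMap.le_opNorm _ _).trans ?_
  exact mul_le_mul (hB c hc) (hR c hc) (norm_nonneg _) ((norm_nonneg _).trans (hB c hc))

lemma prim_contDiff {g : ℝ → F} (hg : ContDiff ℝ (⊤ : ℕ∞) g) (a : F) :
    ContDiff ℝ (⊤ : ℕ∞) (fun t => a + ∫ x in (0:ℝ)..t, g x) ∧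
    ∀ t, HasDerivAt (fun t => a + ∫ x in (0:ℝ)..t, g x) (g t) t := by
  have hc := hg.continuous
  have hd : ∀ t, HasDerivAt (fun t => a + ∫ x in (0:ℝ)..t, g x) (g t) t := fun t =>
    (intervalIntegral.integral_hasDerivAt_right (hc.intervalIntegrable _ _)
      (hc.stronglyMeasurableAtFilter _ _) hc.continuousAt).const_add a
  refine ⟨contDiff_infty_iff_deriv.2 ⟨fun t => (hd t).differentiableAt, ?_⟩, hd⟩
  have : deriv (fun t => a + ∫ x in (0:ℝ)..t, g x) = g := funext fun t => (hd t).deriv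
  rw [this]; exact hg

lemma picard_y {f : F → F} (hf : ContDiff ℝ (⊤ : ℕ∞) f) {M L T : ℝ} (hM : ∀ x, ‖f x‖ ≤ M)
    (hL0 : 0 ≤ L) (hL : ∀ x z, ‖f x - f z‖ ≤ L * ‖x - z‖) (hT : T ≤ 1)
    {y : ℝ → F} (hy : ∀ t ∈ Set.Icc 0 T, HasDerivAt y (f (y t)) t) (k : ℕ) :
    ∃ v : ℝ → F, ContDiff ℝ (⊤ : ℕ∞) v ∧ v 0 = y 0 ∧ ∃ C : ℝ, 0 ≤ C ∧ ∀ t ∈ Set.Icc 0 T,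
      ‖v t - y t‖ ≤ C * t ^ (k + 1) ∧ ‖deriv v t - f (v t)‖ ≤ C * t ^ k := by
  have hM0 : 0 ≤ M := (norm_nonneg _).trans (hM 0)
  induction k with
  | zero =>
    refine ⟨fun _ => y 0, contDiff_const, rfl, M, hM0, fun t ht => ⟨?_, by simpa using hM _⟩⟩
    exact mvt_zero (φ := fun t => y 0 - y t) (φ' := fun t => - f (y t)) hM0 (by simp)
      (fun t ht => (hy t ht).const_sub (y 0)) (fun t _ => by simpa using hM _) t ht
  | succ k ih =>
    obtain ⟨v, hv, hv0, C, hC, hb⟩ := ih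
    obtain ⟨h1, h2⟩ := prim_contDiff (hf.comp hv) (y 0)
    set w : ℝ → F := fun t => y 0 + ∫ x in (0:ℝ)..t, (f ∘ v) x with hw
    have hwy : ∀ t ∈ Set.Icc 0 T, ‖w t - y t‖ ≤ (L * C) * t ^ (k + 1 + 1) :=
      mvt_zero (φ := fun t => w t - y t) (φ' := fun t => f (v t) - f (y t)) (by positivity)
        (by simp [hw]) (fun t ht => (h2 t).sub (hy t ht)) (fun t ht => by
          refine (hL _ _).trans ?_
          rw [mul_assoc]
          gcongr
          exact (hb t ht).1)
    refine ⟨w, h1, by simp [hw], L * C + L * (C + L * C), by positivity, fun t ht => ⟨?_, ?_⟩⟩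
    · refine (hwy t ht).trans ?_
      have := ht.1
      gcongr
      have : 0 ≤ L * (C + L * C) := by positivity
      linarith
    · rw [(h2 t).deriv]
      refine (hL _ _).trans ?_
      have ht0 := ht.1
      have hp : t ^ (k + 1 + 1) ≤ t ^ (k + 1) :=
        pow_le_pow_of_le_one ht0 (ht.2.trans hT) (by omega)
      have h3 : ‖v t - w t‖ ≤ (C + L * C) * t ^ (k + 1) := by
        have : v t - w t = (v t - y t) - (w t - y t) := by abel
        rw [this]
        refine (norm_sub_le _ _).trans ?_
        have h4 := hwy t ht
        have h5 := (hb t ht).1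
        have : (L * C) * t ^ (k + 1 + 1) ≤ (L * C) * t ^ (k + 1) := by gcongr
        linarith
      have h4 : 0 ≤ L * C * t ^ (k + 1) := by positivity
      have := mul_le_mul_of_nonneg_left h3 hL0
      linarith

lemma picard_Z {A : ℝ → F →L[ℝ] F} (hA : ContDiff ℝ (⊤ : ℕ∞) A) {M : ℝ} (hM : ∀ t, ‖A t‖ ≤ M)
    (k : ℕ) :
    ∃ Z : ℝ → F →L[ℝ] F, ContDiff ℝ (⊤ : ℕ∞) Z ∧ Z 0 = 1 ∧ ∃ C : ℝ, 0 ≤ C ∧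
      ∀ t ∈ Set.Icc (0:ℝ) 1, ‖deriv Z t + Z t * A t‖ ≤ C * t ^ k := by
  have hM0 : 0 ≤ M := (norm_nonneg _).trans (hM 0)
  induction k with
  | zero =>
    exact ⟨fun _ => 1, contDiff_const, rfl, M, hM0, fun t ht => by simpa using hM t⟩
  | succ k ih =>
    obtain ⟨Z, hZ, hZ0, C, hC, hb⟩ := ih
    have hZA : ContDiff ℝ (⊤ : ℕ∞) (fun t => -(Z t * A t)) := by
      exact (hZ.clm_comp hA).neg
    obtain ⟨h1, h2⟩ := prim_contDiff hZA 1
    set W : ℝ → F →L[ℝ] F := fun t => 1 + ∫ x in (0:ℝ)..t, -(Z x * A x) with hW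
    refine ⟨W, h1, by simp [hW], C * M, by positivity, fun t ht => ?_⟩
    have hd : ‖Z t - W t‖ ≤ C * t ^ (k + 1) :=
      mvt_zero (φ := fun t => Z t - W t) (φ' := fun t => deriv Z t + Z t * A t) hC
        (by simp [hW, hZ0]) (fun t _ => by
          have := ((hZ.differentiable (by simp)) t).hasDerivAt.fun_sub (h2 t)
          simpa using this) hb t ht
    rw [(h2 t).deriv]
    have : -(Z t * A t) + W t * A t = -((Z t - W t) * A t) := by rw [sub_mul]; abel
    rw [this, norm_neg]
    refine (norm_mul_le _ _).trans ?_
    have := mul_le_mul hd (hM t) (norm_nonneg _) (by have := ht.1; positivity)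
    linarith

end analysis


section core
variable {E : Type*} [NormedAddCommGroup E] [NormedSpace ℝ E] [CompleteSpace E]

lemma iteratedDeriv_scale {F : Type*} [NormedAddCommGroup F] [NormedSpace ℝ F] {Z : ℝ → F}
    (hZ : ContDiff ℝ (⊤ : ℕ∞) Z) (h : ℝ) (n : ℕ) :
    iteratedDeriv n (fun c => Z (c * h)) = fun c => h ^ n • iteratedDeriv n Z (c * h) := by
  induction n with
  | zero => simp
  | succ n ih =>
    rw [iteratedDeriv_succ, ih]
    ext c
    have h1 : HasDerivAt (iteratedDeriv n Z) (iteratedDeriv (n + 1) Z (c * h)) (c * h) := by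
      rw [iteratedDeriv_succ]
      exact ((hZ.differentiable_iteratedDeriv n (by exact_mod_cast ENat.coe_lt_top n)) _).hasDerivAt
    have h2 : HasDerivAt (fun c : ℝ => c * h) h c := by
      simpa using (hasDerivAt_id' c).mul_const h
    have h3 := (h1.scomp c h2).const_smul (h ^ n)
    have h4 : HasDerivAt (fun c => h ^ n • iteratedDeriv n Z (c * h))
      (h ^ n • h • iteratedDeriv (n + 1) Z (c * h)) c := h3
    rw [h4.deriv, smul_smul, pow_succ]

lemma scale_bound {F : Type*} [NormedAddCommGroup F] [NormedSpace ℝ F] {Z : ℝ → F}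
    (hZ : ContDiff ℝ (⊤ : ℕ∞) Z) (n : ℕ) : ∃ C : ℝ, 0 ≤ C ∧ ∀ h ∈ Set.Icc (0:ℝ) 1,
      ∀ c ∈ Set.Icc (0:ℝ) 1, ‖iteratedDeriv n (fun c => Z (c * h)) c‖ ≤ C * h ^ n := by
  obtain ⟨C, hC⟩ := (isCompact_Icc (a := (0:ℝ)) (b := 1)).exists_bound_of_continuousOn
    (hZ.continuous_iteratedDeriv n (by exact_mod_cast le_top)).continuousOn
  refine ⟨C, (norm_nonneg _).trans (hC 0 (by simp)), fun h hh c hc => ?_⟩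
  rw [iteratedDeriv_scale hZ, norm_smul, norm_pow, Real.norm_eq_abs, abs_of_nonneg hh.1, mul_comm]
  gcongr
  · exact pow_nonneg hh.1 n
  · exact hC _ ⟨mul_nonneg hc.1 hh.1, mul_le_one₀ hc.2 hh.1 hh.2⟩

lemma u_contDiff {s : ℕ} {h : ℝ} {u : ℝ → E} {γ : ℕ → E}
    (hu : ∀ c, HasDerivAt u (h • ∑ j ∈ Finset.range s, legP j c • γ j) c) :
    ContDiff ℝ (⊤ : ℕ∞) u := by
  refine contDiff_infty_iff_deriv.2 ⟨fun t => (hu t).differentiableAt, ?_⟩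
  have : deriv u = fun c => h • ∑ j ∈ Finset.range s, legP j c • γ j := funext fun t => (hu t).deriv
  rw [this]
  refine contDiff_const.smul (ContDiff.sum fun j _ => (legP_contDiff j).smul contDiff_const)

lemma u_iteratedDeriv {s : ℕ} {h : ℝ} {u : ℝ → E} {γ : ℕ → E}
    (hu : ∀ c, HasDerivAt u (h • ∑ j ∈ Finset.range s, legP j c • γ j) c) (k : ℕ) (c : ℝ) :
    iteratedDeriv (k + 1) u c = h • ∑ j ∈ Finset.range s, iteratedDeriv k (legP j) c • γ j := by
  have hd : deriv u = fun c => h • ∑ j ∈ Finset.range s, legP j c • γ j := funext fun t => (hu t).deriv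
  have hc : ∀ j, ContDiff ℝ (k : ℕ∞) (legP j) := fun j => (legP_contDiff j).of_le
    (by exact_mod_cast le_top)
  have hc' : ∀ j, ContDiff ℝ (k : ℕ∞) (fun c => legP j c • γ j) := fun j =>
    (hc j).smul contDiff_const
  rw [iteratedDeriv_succ', hd, iteratedDeriv_fun_const_smul, iteratedDeriv_fun_sum]
  · congr 1
    apply Finset.sum_congr rfl
    intro j _
    exact iteratedDeriv_smul_const (hc j).contDiffAt (γ j)
  · intro j _; exact (hc' j).contDiffAt
  · exact (ContDiff.sum fun j _ => hc' j).contDiffAt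

lemma u_bounds {f : E → E} (hf : ContDiff ℝ (⊤ : ℕ∞) f)
    (hb : ∀ k, ∃ C : ℝ, ∀ x, ‖iteratedFDeriv ℝ k f x‖ ≤ C) {s : ℕ} {T Ce : ℝ}
    {η : ℕ → ℝ → ℝ} (hCe : 0 ≤ Ce) (hη : ∀ h ∈ Set.Ioc 0 T, ∀ j < s, |η j h| ≤ Ce)
    {u : ℝ → ℝ → E}
    (hu : ∀ h ∈ Set.Ioc 0 T, ∀ c, HasDerivAt (u h) (h • ∑ j ∈ Finset.range s,
      legP j c • (η j h • ∫ t in (0:ℝ)..1, legP j t • f (u h t))) c) (k : ℕ) :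
    (∃ D : ℝ, 0 ≤ D ∧ ∀ h ∈ Set.Ioc 0 T, ∀ c ∈ Set.Icc (0:ℝ) 1, ∀ i, 1 ≤ i → i ≤ k →
      ‖iteratedDeriv i (u h) c‖ ≤ (D * h) ^ i) ∧
    (∃ C : ℝ, 0 ≤ C ∧ ∀ h ∈ Set.Ioc 0 T, ∀ c ∈ Set.Icc (0:ℝ) 1,
      ‖iteratedDeriv k (f ∘ u h) c‖ ≤ C * h ^ k) ∧
    (∃ C : ℝ, 0 ≤ C ∧ ∀ h ∈ Set.Ioc 0 T, ∀ j, k ≤ j → j < s →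
      ‖∫ t in (0:ℝ)..1, legP j t • f (u h t)‖ ≤ C * h ^ k) := by
  have main : ∀ k, (∃ D : ℝ, 0 ≤ D ∧ ∀ h ∈ Set.Ioc 0 T, ∀ c ∈ Set.Icc (0:ℝ) 1, ∀ i, 1 ≤ i → i ≤ k →
      ‖iteratedDeriv i (u h) c‖ ≤ (D * h) ^ i) →
      (∃ C : ℝ, 0 ≤ C ∧ ∀ h ∈ Set.Ioc 0 T, ∀ c ∈ Set.Icc (0:ℝ) 1,
      ‖iteratedDeriv k (f ∘ u h) c‖ ≤ C * h ^ k) ∧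
    (∃ C : ℝ, 0 ≤ C ∧ ∀ h ∈ Set.Ioc 0 T, ∀ j, k ≤ j → j < s →
      ‖∫ t in (0:ℝ)..1, legP j t • f (u h t)‖ ≤ C * h ^ k) := by
    intro k hD
    obtain ⟨D, hD0, hD⟩ := hD
    choose Cf hCf using hb
    have hG : (∃ C : ℝ, 0 ≤ C ∧ ∀ h ∈ Set.Ioc 0 T, ∀ c ∈ Set.Icc (0:ℝ) 1,
      ‖iteratedDeriv k (f ∘ u h) c‖ ≤ C * h ^ k) := by
      refine ⟨k.factorial * (∑ i ∈ Finset.range (k + 1), |Cf i|) * D ^ k, by positivity, ?_⟩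
      intro h hh c hc
      have := norm_iteratedFDeriv_comp_le (n := k) hf (u_contDiff (hu h hh))
        (by exact_mod_cast le_top) c
        (C := ∑ i ∈ Finset.range (k + 1), |Cf i|) (D := D * h)
        (fun i hi => ((hCf i _).trans (le_abs_self _)).trans
          (Finset.single_le_sum (f := fun i => |Cf i|) (fun _ _ => abs_nonneg _)
            (Finset.mem_range.2 (by omega))))
        (fun i h1 h2 => by
          rw [norm_iteratedFDeriv_eq_norm_iteratedDeriv]
          exact hD h hh c hc i h1 h2)
      rw [norm_iteratedFDeriv_eq_norm_iteratedDeriv] at this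
      rw [mul_pow, ← mul_assoc] at this
      exact this
    refine ⟨hG, ?_⟩
    obtain ⟨C, hC0, hC⟩ := hG
    obtain ⟨Cp, hCp0, hCp⟩ := legP_deriv_bound 0 s
    simp only [iteratedDeriv_zero] at hCp
    refine ⟨Cp * C, by positivity, fun h hh j hkj hjs => ?_⟩
    have hfu : ContDiff ℝ (⊤ : ℕ∞) (f ∘ u h) := hf.comp (u_contDiff (hu h hh))
    obtain ⟨B, hB⟩ := taylor_approx k (f ∘ u h) hfu _ (hC h hh)
    have := orth_est hkj hCp0 (hCp j hjs) hfu.continuous hB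
    rw [mul_assoc]; exact this
  have hDk : ∀ k, ∃ D : ℝ, 0 ≤ D ∧ ∀ h ∈ Set.Ioc 0 T, ∀ c ∈ Set.Icc (0:ℝ) 1, ∀ i, 1 ≤ i → i ≤ k →
      ‖iteratedDeriv i (u h) c‖ ≤ (D * h) ^ i := by
    intro k
    induction k with
    | zero => exact ⟨0, le_rfl, fun h _ c _ i h1 h2 => by omega⟩
    | succ k ih =>
      obtain ⟨_, C, hC0, hC⟩ := main k ih
      obtain ⟨D, hD0, hD⟩ := ih
      obtain ⟨Cp, hCp0, hCp⟩ := legP_deriv_bound k s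
      have hS : 0 ≤ s * (Cp * (Ce * C)) := by positivity
      refine ⟨D + (s * (Cp * (Ce * C)) + 1), by positivity, fun h hh c hc i h1 h2 => ?_⟩
      have hh0 := hh.1.le
      rcases Nat.lt_or_ge i (k + 1) with h3 | h3
      · refine (hD h hh c hc i h1 (by omega)).trans ?_
        gcongr
        linarith
      · have : i = k + 1 := by omega
        subst this
        rw [u_iteratedDeriv (hu h hh), norm_smul, Real.norm_eq_abs, abs_of_nonneg hh0]
        have hsum : ‖∑ j ∈ Finset.range s, iteratedDeriv k (legP j) c •
            (η j h • ∫ t in (0:ℝ)..1, legP j t • f (u h t))‖ ≤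
            ∑ j ∈ Finset.range s, Cp * (Ce * (C * h ^ k)) := by
          apply norm_sum_le_of_le
          intro j hj
          have hj := Finset.mem_range.1 hj
          rcases Nat.lt_or_ge j k with h4 | h4
          · rw [legP_iteratedDeriv_zero j k h4]
            simp only [zero_smul, norm_zero]
            positivity
          · rw [norm_smul, norm_smul]
            apply mul_le_mul (hCp j hj c hc) _ (by positivity) hCp0
            exact mul_le_mul (hη h hh j hj) (hC h hh j h4 hj) (norm_nonneg _) hCe
        rw [Finset.sum_const, Finset.card_range, nsmul_eq_mul] at hsum
        calc h * _ ≤ h * (s * (Cp * (Ce * (C * h ^ k)))) := by gcongr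
          _ = (s * (Cp * (Ce * C))) * h ^ (k + 1) := by ring
          _ ≤ (s * (Cp * (Ce * C)) + 1) ^ (k + 1) * h ^ (k + 1) := by
            gcongr
            refine le_trans (by linarith) (le_self_pow₀ (by linarith) (by omega))
          _ ≤ _ := by
            rw [← mul_pow]
            apply pow_le_pow_left₀ (by positivity)
            exact mul_le_mul_of_nonneg_right (by linarith) hh0
  exact ⟨hDk k, main k (hDk k)⟩



lemma second_order {f : E → E} (hf : ContDiff ℝ (⊤ : ℕ∞) f) {M : ℝ}
    (hM : ∀ x, ‖iteratedFDeriv ℝ 2 f x‖ ≤ M) (a b : E) :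
    ‖f b - f a - fderiv ℝ f a (b - a)‖ ≤ M * ‖b - a‖ ^ 2 := by
  have hM0 : 0 ≤ M := (norm_nonneg _).trans (hM 0)
  have hf1 : ContDiff ℝ (⊤ : ℕ∞) (fderiv ℝ f) := hf.fderiv_right (by simp)
  have h2 : ∀ x z, ‖fderiv ℝ f z - fderiv ℝ f x‖ ≤ M * ‖z - x‖ := fun x z =>
    Convex.norm_image_sub_le_of_norm_fderiv_le (𝕜 := ℝ) (s := Set.univ)
      (fun x _ => (hf1.differentiable (by simp)) x)
      (fun x _ => by
        rw [← norm_iteratedFDeriv_one, norm_iteratedFDeriv_fderiv]; exact hM x)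
      convex_univ (Set.mem_univ _) (Set.mem_univ _)
  have := Convex.norm_image_sub_le_of_norm_fderiv_le' (𝕜 := ℝ) (f := f) (s := segment ℝ a b)
    (x := a) (y := b) (C := M * ‖b - a‖) (φ := fderiv ℝ f a)
    (fun x _ => (hf.differentiable (by simp)) x)
    (fun x hx => (h2 a x).trans (by
      gcongr
      have := norm_sub_le_of_mem_segment hx
      exact this)) (convex_segment a b)
    (left_mem_segment ℝ a b) (right_mem_segment ℝ a b)
  rw [sq, ← mul_assoc]; exact this

lemma lip_of_bound {f : E → E} (hf : ContDiff ℝ (⊤ : ℕ∞) f) {L : ℝ}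
    (hL : ∀ x, ‖iteratedFDeriv ℝ 1 f x‖ ≤ L) (a b : E) : ‖f b - f a‖ ≤ L * ‖b - a‖ :=
  Convex.norm_image_sub_le_of_norm_fderiv_le (𝕜 := ℝ) (s := Set.univ)
      (fun x _ => (hf.differentiable (by simp)) x)
      (fun x _ => by rw [← norm_iteratedFDeriv_one]; exact hL x)
      convex_univ (Set.mem_univ _) (Set.mem_univ _)

lemma one_step {f : E → E} (hf : ContDiff ℝ (⊤ : ℕ∞) f) {L M2 : ℝ} (hL0 : 0 ≤ L)
    (hL : ∀ a b, ‖f b - f a‖ ≤ L * ‖b - a‖) (hM20 : 0 ≤ M2)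
    (hM2 : ∀ a b, ‖f b - f a - fderiv ℝ f a (b - a)‖ ≤ M2 * ‖b - a‖ ^ 2)
    {s : ℕ} {h : ℝ} (hh : 0 < h) (hh1 : h ≤ 1) (hhL : h * L ≤ 1 / 2)
    {u V V' : ℝ → E} {W W' : ℝ → E →L[ℝ] E} {γ : ℕ → E} {η : ℕ → ℝ}
    (hγ : ∀ j, γ j = ∫ t in (0:ℝ)..1, legP j t • f (u t))
    (hu : ∀ c, HasDerivAt u (h • ∑ j ∈ Finset.range s, legP j c • (η j • γ j)) c)
    (hV'c : Continuous V') (hW'c : Continuous W')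
    (hV : ∀ c, HasDerivAt V (h • V' c) c) (hW : ∀ c, HasDerivAt W (h • W' c) c)
    (huV : u 0 = V 0)
    {CR CS CD CZ CZ' CR' CS' : ℝ} (hCR : 0 ≤ CR) (hCS : 0 ≤ CS) (hCD : 0 ≤ CD) (hCZ : 0 ≤ CZ)
    (hCZ' : 0 ≤ CZ')
    (hR : ∀ c ∈ Set.Icc (0:ℝ) 1, ‖rem s (f ∘ u) c‖ ≤ CR * h ^ s)
    (hS : ∀ c ∈ Set.Icc (0:ℝ) 1,
      ‖∑ j ∈ Finset.range s, legP j c • ((1 - η j) • γ j)‖ ≤ CS * h ^ s)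
    (hD : ∀ c ∈ Set.Icc (0:ℝ) 1, ‖V' c - f (V c)‖ ≤ CD * h ^ (2 * s))
    (hZ : ∀ c ∈ Set.Icc (0:ℝ) 1, ‖W c‖ ≤ CZ)
    (hZ' : ∀ c ∈ Set.Icc (0:ℝ) 1, ‖W' c + W c * fderiv ℝ f (V c)‖ ≤ CZ' * h ^ s)
    (hIR : ‖∫ c in (0:ℝ)..1, W c (rem s (f ∘ u) c)‖ ≤ CR' * h ^ (2 * s))
    (hIS : ‖∫ c in (0:ℝ)..1, W c (∑ j ∈ Finset.range s, legP j c • ((1 - η j) • γ j))‖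
      ≤ CS' * h ^ (2 * s))
    (hW1 : ‖W 1 - 1‖ ≤ 1 / 2) :
    ‖u 1 - V 1‖ ≤ 2 * (CZ' * (2 * (CR + CS + CD)) + CZ * (M2 * (2 * (CR + CS + CD)) ^ 2 + CD)
      + CR' + CS') * h ^ (2 * s + 1) := by
  have hlc := legP_cont
  have huc : Continuous u := continuous_iff_continuousAt.2 fun c => (hu c).continuousAt
  have hVc : Continuous V := continuous_iff_continuousAt.2 fun c => (hV c).continuousAt
  have hWc : Continuous W := continuous_iff_continuousAt.2 fun c => (hW c).continuousAt
  have hfc := hf.continuous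
  have hf'c : Continuous (fderiv ℝ f) := (hf.fderiv_right (m := (⊤ : ℕ∞)) (by simp)).continuous
  set R : ℝ → E := rem s (f ∘ u) with hRdef
  have hRc : Continuous R := rem_cont s (hfc.comp huc)
  set S : ℝ → E := fun c => ∑ j ∈ Finset.range s, legP j c • ((1 - η j) • γ j) with hSdef
  have hSc : Continuous S := by fun_prop
  have hsum : ∀ c, ∑ j ∈ Finset.range s, legP j c • (η j • γ j) = f (u c) - R c - S c := by
    intro c
    simp only [hRdef, hSdef, rem, Function.comp, ← hγ, sub_smul, one_smul, smul_sub,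
      Finset.sum_sub_distrib]
    abel
  set w : ℝ → E := fun c => u c - V c with hw
  have hwc : Continuous w := by fun_prop
  have hwd : ∀ c, HasDerivAt w (h • (f (u c) - R c - S c - V' c)) c := by
    intro c
    have := (hu c).fun_sub (hV c)
    rw [hsum, ← smul_sub] at this
    exact this
  have hw0 : w 0 = 0 := by simp [hw, huV]
  have hps : h ^ (2 * s) ≤ h ^ s := pow_le_pow_of_le_one hh.le hh1 (by omega)
  -- first estimate
  have hwb : ∀ c ∈ Set.Icc (0:ℝ) 1, ‖w c‖ ≤ 2 * (CR + CS + CD) * h ^ (s + 1) := by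
    obtain ⟨c₀, hc₀, hmax⟩ := isCompact_Icc.exists_isMaxOn (Set.nonempty_Icc.2 (zero_le_one' ℝ))
      hwc.norm.continuousOn
    have hmax' : ∀ c ∈ Set.Icc (0:ℝ) 1, ‖w c‖ ≤ ‖w c₀‖ := fun c hc => hmax hc
    set μ := ‖w c₀‖ with hμ
    have hμ0 : 0 ≤ μ := norm_nonneg _
    have hb : ∀ c ∈ Set.Icc (0:ℝ) 1, ‖h • (f (u c) - R c - S c - V' c)‖ ≤
        h * (L * μ + (CR + CS + CD) * h ^ s) * c ^ 0 := by
      intro c hc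
      rw [norm_smul, Real.norm_eq_abs, abs_of_pos hh, pow_zero, mul_one]
      gcongr
      have e : f (u c) - R c - S c - V' c = (f (u c) - f (V c)) - R c - S c - (V' c - f (V c)) := by
        abel
      rw [e]
      have h1 : ‖f (u c) - f (V c)‖ ≤ L * μ := (hL _ _).trans (by gcongr; exact hmax' c hc)
      have h2 := hR c hc
      have h3 := hS c hc
      have h4 := (hD c hc).trans (mul_le_mul_of_nonneg_left hps hCD)
      have n1 := norm_sub_le (f (u c) - f (V c) - R c - S c) (V' c - f (V c))
      have n2 := norm_sub_le (f (u c) - f (V c) - R c) (S c)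
      have n3 := norm_sub_le (f (u c) - f (V c)) (R c)
      linarith
    have hb0 : 0 ≤ h * (L * μ + (CR + CS + CD) * h ^ s) := by positivity
    have h5 := mvt_zero hb0 hw0 (fun t _ => hwd t) hb c₀ hc₀
    have h6 : μ ≤ h * (L * μ + (CR + CS + CD) * h ^ s) := by
      refine h5.trans ?_
      have : c₀ ^ (0 + 1) ≤ 1 := by simpa using hc₀.2
      nlinarith
    have h7 : h * L * μ ≤ 1 / 2 * μ := by gcongr
    have h8 : μ ≤ 2 * (CR + CS + CD) * h ^ (s + 1) := by
      rw [pow_succ]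
      linarith
    exact fun c hc => (hmax' c hc).trans h8
  set Cw := 2 * (CR + CS + CD) with hCw
  have hCw0 : 0 ≤ Cw := by positivity
  -- second estimate
  set X : ℝ → E := fun c => (W' c + W c * fderiv ℝ f (V c)) (w c) +
    W c ((f (u c) - f (V c) - fderiv ℝ f (V c) (u c - V c)) - (V' c - f (V c))) with hX
  have hXc : Continuous X := by
    have : Continuous fun c => W c * fderiv ℝ f (V c) := hWc.mul (hf'c.comp hVc)
    fun_prop
  have hXb : ∀ c ∈ Set.Icc (0:ℝ) 1, ‖X c‖ ≤ (CZ' * Cw + CZ * (M2 * Cw ^ 2 + CD)) * h ^ (2 * s) := by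
    intro c hc
    have hwc' := hwb c hc
    have h1 : ‖(W' c + W c * fderiv ℝ f (V c)) (w c)‖ ≤ CZ' * h ^ s * (Cw * h ^ (s + 1)) :=
      (ContinuousLinearMap.le_opNorm _ _).trans
        (mul_le_mul (hZ' c hc) hwc' (norm_nonneg _) (by positivity))
    have h2 : ‖f (u c) - f (V c) - fderiv ℝ f (V c) (u c - V c)‖ ≤ M2 * (Cw * h ^ (s + 1)) ^ 2 :=
      (hM2 _ _).trans (by gcongr)
    have h3 : ‖(f (u c) - f (V c) - fderiv ℝ f (V c) (u c - V c)) - (V' c - f (V c))‖ ≤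
        M2 * (Cw * h ^ (s + 1)) ^ 2 + CD * h ^ (2 * s) :=
      (norm_sub_le _ _).trans (add_le_add h2 (hD c hc))
    have h4 : ‖W c ((f (u c) - f (V c) - fderiv ℝ f (V c) (u c - V c)) - (V' c - f (V c)))‖ ≤
        CZ * (M2 * (Cw * h ^ (s + 1)) ^ 2 + CD * h ^ (2 * s)) :=
      (ContinuousLinearMap.le_opNorm _ _).trans
        (mul_le_mul (hZ c hc) h3 (norm_nonneg _) hCZ)
    have p1 : h ^ s * h ^ (s + 1) ≤ h ^ (2 * s) := by
      rw [← pow_add]; exact pow_le_pow_of_le_one hh.le hh1 (by omega)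
    have p2 : (h ^ (s + 1)) ^ 2 ≤ h ^ (2 * s) := by
      rw [← pow_mul]; exact pow_le_pow_of_le_one hh.le hh1 (by omega)
    have q1 : CZ' * Cw * (h ^ s * h ^ (s + 1)) ≤ CZ' * Cw * h ^ (2 * s) := by gcongr
    have q2 : CZ * (M2 * Cw ^ 2) * (h ^ (s + 1)) ^ 2 ≤ CZ * (M2 * Cw ^ 2) * h ^ (2 * s) := by gcongr
    refine (norm_add_le _ _).trans ((add_le_add h1 h4).trans ?_)
    rw [mul_pow]
    linarith
  have hφ : ∀ c, HasDerivAt (fun c => W c (w c)) (h • (X c - W c (R c) - W c (S c))) c := by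
    intro c
    refine ((hW c).clm_apply (hwd c)).congr_deriv ?_
    simp only [hX, hw, smul_apply, add_apply, ContinuousLinearMap.mul_apply,
      map_sub, map_smul, smul_sub, smul_add]
    abel
  have hintegral := intervalIntegral.integral_eq_sub_of_hasDerivAt (a := (0:ℝ)) (b := 1)
    (fun c _ => hφ c) (by apply Continuous.intervalIntegrable; fun_prop)
  rw [hw0, map_zero, sub_zero, intervalIntegral.integral_smul,
    intervalIntegral.integral_sub (by apply Continuous.intervalIntegrable; fun_prop)
      (by apply Continuous.intervalIntegrable; fun_prop),
    intervalIntegral.integral_sub (by apply Continuous.intervalIntegrable; fun_prop)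
      (by apply Continuous.intervalIntegrable; fun_prop)] at hintegral
  have hWw : ‖W 1 (w 1)‖ ≤ h * ((CZ' * Cw + CZ * (M2 * Cw ^ 2 + CD)) * h ^ (2 * s) +
      CR' * h ^ (2 * s) + CS' * h ^ (2 * s)) := by
    rw [← hintegral, norm_smul, Real.norm_eq_abs, abs_of_pos hh]
    gcongr
    refine (norm_sub_le _ _).trans (add_le_add ((norm_sub_le _ _).trans (add_le_add ?_ hIR)) hIS)
    exact int_bound hXb
  have hfin : ‖w 1‖ ≤ ‖W 1 (w 1)‖ + 1 / 2 * ‖w 1‖ := by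
    have e : w 1 = W 1 (w 1) - (W 1 - 1) (w 1) := by simp
    calc ‖w 1‖ = ‖W 1 (w 1) - (W 1 - 1) (w 1)‖ := by rw [← e]
      _ ≤ ‖W 1 (w 1)‖ + ‖(W 1 - 1) (w 1)‖ := norm_sub_le _ _
      _ ≤ _ := by
        gcongr
        exact (ContinuousLinearMap.le_opNorm _ _).trans (by gcongr)
  have hgoal : ‖w 1‖ ≤ 2 * (CZ' * Cw + CZ * (M2 * Cw ^ 2 + CD) + CR' + CS') * h ^ (2 * s + 1) := by
    have h9 : ‖w 1‖ ≤ 2 * ‖W 1 (w 1)‖ := by linarith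
    refine h9.trans ((mul_le_mul_of_nonneg_left hWw zero_le_two).trans (le_of_eq ?_))
    ring
  exact hgoal


set_option maxHeartbeats 1600000 in
theorem core_est {f : E → E} (hf : ContDiff ℝ (⊤ : ℕ∞) f)
    (hb : ∀ k, ∃ C : ℝ, ∀ x, ‖iteratedFDeriv ℝ k f x‖ ≤ C) {s : ℕ} {T : ℝ} (hT1 : T ≤ 1)
    {y : ℝ → E} (hy : ∀ t ∈ Set.Icc 0 T, HasDerivAt y (f (y t)) t)
    {η : ℕ → ℝ → ℝ} {Cη : ℝ} (hCη : 0 ≤ Cη)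
    (hη : ∀ h ∈ Set.Ioc 0 T, ∀ j < s, |1 - η j h| ≤ Cη * h ^ (2 * (s - j)))
    {u : ℝ → ℝ → E} (hu0 : ∀ h ∈ Set.Ioc 0 T, u h 0 = y 0)
    (hu : ∀ h ∈ Set.Ioc 0 T, ∀ c, HasDerivAt (u h) (h • ∑ j ∈ Finset.range s,
      legP j c • (η j h • ∫ t in (0:ℝ)..1, legP j t • f (u h t))) c) :
    ∃ C > (0:ℝ), ∃ h₁ > (0:ℝ), ∀ h : ℝ, 0 < h → h ≤ min T h₁ →
      ‖u h 1 - y h‖ ≤ C * h ^ (2 * s + 1) := by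
  obtain ⟨M0, hM0⟩ := hb 0
  obtain ⟨L, hL'⟩ := hb 1
  obtain ⟨M2, hM2'⟩ := hb 2
  have hL0 : 0 ≤ L := (norm_nonneg _).trans (hL' 0)
  have hM20 : 0 ≤ M2 := (norm_nonneg _).trans (hM2' 0)
  have hL := lip_of_bound hf hL'
  have hM2 := second_order hf hM2'
  obtain ⟨v, hv, hv0, CD, hCD, hvb⟩ := picard_y hf (M := M0)
    (fun x => by simpa using hM0 x) hL0 (fun x z => hL z x) hT1 hy (2 * s)
  have hf'c : ContDiff ℝ (⊤ : ℕ∞) (fderiv ℝ f) := hf.fderiv_right (by simp)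
  obtain ⟨Z, hZ, hZ0, CZ', hCZ', hZb⟩ := picard_Z (A := fun t => fderiv ℝ f (v t)) (M := L)
    (hf'c.comp hv) (fun t => by rw [← norm_iteratedFDeriv_one]; exact hL' _) s
  choose CT hCT0 hCT using fun n => scale_bound hZ n
  have hηb : ∀ h ∈ Set.Ioc 0 T, ∀ j < s, |η j h| ≤ 1 + Cη := by
    intro h hh j hj
    have h1 := hη h hh j hj
    have h2 : h ^ (2 * (s - j)) ≤ 1 := pow_le_one₀ hh.1.le (hh.2.trans hT1)
    have h3 : Cη * h ^ (2 * (s - j)) ≤ Cη := mul_le_of_le_one_right hCη h2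
    have h4 := abs_le.1 (h1.trans h3)
    rw [abs_le]; constructor <;> linarith
  choose CG hCG0 hCG using fun k => (u_bounds hf hb (by positivity) hηb hu k).2.1
  choose Cg hCg0 hCg using fun k => (u_bounds hf hb (by positivity) hηb hu k).2.2
  obtain ⟨Cp, hCp0, hCp⟩ := legP_deriv_bound 0 s
  simp only [iteratedDeriv_zero] at hCp
  set CR := (1 + s * (Cp * Cp)) * CG s with hCR
  set CS := ∑ j ∈ Finset.range s, Cp * (Cη * Cg j) with hCS
  set CS' := ∑ j ∈ Finset.range s, Cη * (Cp * CT j * Cg j) with hCS'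
  set CR' := CT s * CR with hCR'
  have hCR0 : 0 ≤ CR := mul_nonneg (by positivity) (hCG0 s)
  have hCS0 : 0 ≤ CS := Finset.sum_nonneg fun j _ => mul_nonneg hCp0 (mul_nonneg hCη (hCg0 j))
  have hCS'0 : 0 ≤ CS' := Finset.sum_nonneg fun j _ =>
    mul_nonneg hCη (mul_nonneg (mul_nonneg hCp0 (hCT0 j)) (hCg0 j))
  have hCR'0 : 0 ≤ CR' := mul_nonneg (hCT0 s) hCR0
  have hCT00 := hCT0 0
  set K := 2 * (CZ' * (2 * (CR + CS + CD)) + CT 0 * (M2 * (2 * (CR + CS + CD)) ^ 2 + CD)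
      + CR' + CS') with hK
  have hK0 : 0 ≤ K := by positivity
  have hCT1 := hCT0 1
  refine ⟨K + CD + 1, by positivity, 1 / (2 * (L + CT 1 + 1)), by positivity, fun h hh hhT => ?_⟩
  have hhT' : h ≤ T := hhT.trans (min_le_left _ _)
  have hh1 : h ≤ 1 := hhT'.trans hT1
  have hhI : h ∈ Set.Ioc 0 T := ⟨hh, hhT'⟩
  have hh2 : h * (L + CT 1 + 1) ≤ 1 / 2 := by
    have := hhT.trans (min_le_right _ _)
    rw [le_div_iff₀ (by positivity)] at this
    linarith
  have hhL : h * L ≤ 1 / 2 := by nlinarith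
  have hhC : h * CT 1 ≤ 1 / 2 := by nlinarith
  have hch : ∀ c ∈ Set.Icc (0:ℝ) 1, c * h ∈ Set.Icc 0 h := fun c hc =>
    ⟨mul_nonneg hc.1 hh.le, by nlinarith [hc.2]⟩
  have hscale : ∀ c : ℝ, HasDerivAt (fun c : ℝ => c * h) h c := fun c => by
    simpa using (hasDerivAt_id' c).mul_const h
  have hdv : ∀ t, HasDerivAt v (deriv v t) t := fun t => ((hv.differentiable (by simp)) t).hasDerivAt
  have hdZ : ∀ t, HasDerivAt Z (deriv Z t) t := fun t => ((hZ.differentiable (by simp)) t).hasDerivAt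
  have hdvc : Continuous (deriv v) := (contDiff_infty_iff_deriv.1 hv).2.continuous
  have hdZc : Continuous (deriv Z) := (contDiff_infty_iff_deriv.1 hZ).2.continuous
  have hWsm : ContDiff ℝ (⊤ : ℕ∞) (fun c => Z (c * h)) :=
    hZ.comp (contDiff_id.mul contDiff_const)
  have hcv : ∀ c : ℝ, HasDerivAt (fun c => v (c * h)) (h • deriv v (c * h)) c := fun c =>
    HasDerivAt.scomp (g₁ := v) (h := fun c : ℝ => c * h) c (hdv (c * h)) (hscale c)
  have hcZ : ∀ c : ℝ, HasDerivAt (fun c => Z (c * h)) (h • deriv Z (c * h)) c := fun c =>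
    HasDerivAt.scomp (g₁ := Z) (h := fun c : ℝ => c * h) c (hdZ (c * h)) (hscale c)
  have hfu : ContDiff ℝ (⊤ : ℕ∞) (f ∘ u h) := hf.comp (u_contDiff (hu h hhI))
  have hhIcc : h ∈ Set.Icc (0:ℝ) 1 := ⟨hh.le, hh1⟩
  have hRb : ∀ c ∈ Set.Icc (0:ℝ) 1, ‖rem s (f ∘ u h) c‖ ≤ CR * h ^ s := by
    obtain ⟨B, hB⟩ := taylor_approx s (f ∘ u h) hfu _ (hCG s h hhI)
    intro c hc
    have := rem_est hCp0 hCp hfu.continuous hB c hc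
    rw [hCR, mul_assoc]; exact this
  have key := one_step hf hL0 hL hM20 hM2 hh hh1 hhL
    (u := u h) (V := fun c => v (c * h)) (V' := fun c => deriv v (c * h))
    (W := fun c => Z (c * h)) (W' := fun c => deriv Z (c * h))
    (γ := fun j => ∫ t in (0:ℝ)..1, legP j t • f (u h t)) (η := fun j => η j h)
    (fun _ => rfl) (hu h hhI) (by fun_prop) (by fun_prop)
    hcv hcZ
    (by simp [hu0 h hhI, hv0]) (CR := CR) (CS := CS) (CD := CD) (CZ := CT 0) (CZ' := CZ')
    (CR' := CR') (CS' := CS') hCR0 hCS0 hCD hCT00 hCZ' hRb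
    (by
      intro c hc
      rw [hCS, Finset.sum_mul]
      apply norm_sum_le_of_le
      intro j hj
      have hj := Finset.mem_range.1 hj
      rw [norm_smul, norm_smul]
      have h1 : |1 - η j h| * ‖∫ t in (0:ℝ)..1, legP j t • f (u h t)‖ ≤
          Cη * h ^ (2 * (s - j)) * (Cg j * h ^ j) :=
        mul_le_mul (hη h hhI j hj) (hCg j h hhI j le_rfl hj) (norm_nonneg _) (by positivity)
      have h2 : h ^ (2 * (s - j)) * h ^ j ≤ h ^ s := by
        rw [← pow_add]; exact pow_le_pow_of_le_one hh.le hh1 (by omega)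
      have h3 : Cη * Cg j * (h ^ (2 * (s - j)) * h ^ j) ≤ Cη * Cg j * h ^ s :=
        mul_le_mul_of_nonneg_left h2 (mul_nonneg hCη (hCg0 j))
      have h4 := mul_le_mul (hCp j hj c hc) (h1.trans (le_of_eq (by ring) |>.trans h3))
        (by positivity) hCp0
      refine h4.trans (le_of_eq (by ring)))
    (by
      intro c hc
      have h1 := hch c hc
      refine (hvb (c * h) ⟨h1.1, h1.2.trans hhT'⟩).2.trans ?_
      gcongr
      · exact h1.1
      · exact h1.2)
    (by
      intro c hc
      simpa using hCT 0 h hhIcc c hc)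
    (by
      intro c hc
      have h1 := hch c hc
      refine (hZb (c * h) ⟨h1.1, h1.2.trans hh1⟩).trans ?_
      gcongr
      · exact h1.1
      · exact h1.2)
    (by
      obtain ⟨B, hB⟩ := taylor_approx s _ hWsm _ (hCT s h hhIcc)
      have := rem_weighted hfu.continuous hRb hWsm.continuous hB
      refine this.trans (le_of_eq ?_)
      rw [hCR']; ring)
    (by
      have hlc := legP_cont
      have hWc := hWsm.continuous
      have e : ∀ c : ℝ, (Z (c * h)) (∑ j ∈ Finset.range s, legP j c • ((1 - η j h) •
          ∫ t in (0:ℝ)..1, legP j t • f (u h t))) = ∑ j ∈ Finset.range s, (1 - η j h) •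
          ((legP j c • Z (c * h)) (∫ t in (0:ℝ)..1, legP j t • f (u h t))) := by
        intro c
        simp only [map_sum, map_smul, smul_apply]
        apply Finset.sum_congr rfl
        intro j _
        rw [smul_comm]
      simp_rw [e]
      rw [intervalIntegral.integral_finsetSum]
      · rw [hCS', Finset.sum_mul]
        apply norm_sum_le_of_le
        intro j hj
        have hj := Finset.mem_range.1 hj
        rw [intervalIntegral.integral_smul, ← ContinuousLinearMap.intervalIntegral_apply
          (by apply Continuous.intervalIntegrable; fun_prop), norm_smul]
        obtain ⟨B, hB⟩ := taylor_approx j _ hWsm _ (hCT j h hhIcc)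
        have h1 := orth_est le_rfl hCp0 (hCp j hj) hWc hB
        have h2 := (ContinuousLinearMap.le_opNorm (∫ c in (0:ℝ)..1, legP j c • Z (c * h))
          (∫ t in (0:ℝ)..1, legP j t • f (u h t))).trans
          (mul_le_mul h1 (hCg j h hhI j le_rfl hj) (norm_nonneg _)
            (mul_nonneg hCp0 (mul_nonneg (hCT0 j) (by positivity))))
        have h3 := mul_le_mul (hη h hhI j hj) h2 (norm_nonneg _) (by positivity)
        refine h3.trans (le_of_eq ?_)
        have : h ^ (2 * s) = h ^ (2 * (s - j)) * h ^ j * h ^ j := by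
          rw [← pow_add, ← pow_add]; congr 1; omega
        rw [this]; ring
      · intro j _
        apply Continuous.intervalIntegrable; fun_prop)
    (by
      have h1 : ∀ c ∈ Set.Icc (0:ℝ) 1, ‖deriv (fun c => Z (c * h)) c‖ ≤ CT 1 * h * c ^ 0 := by
        intro c hc
        simpa using hCT 1 h hhIcc c hc
      have h2 := mvt_zero (φ := fun c => Z (c * h) - 1) (mul_nonneg hCT1 hh.le) (by simp [hZ0])
        (fun t _ => (((hWsm.differentiable (by simp)) t).hasDerivAt).sub_const 1) h1 1 (by simp)
      refine h2.trans ?_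
      simp only [one_pow, mul_one]
      linarith)
  have h1 := (hvb h ⟨hh.le, hhT'⟩).1
  have e : u h 1 - y h = (u h 1 - v (1 * h)) + (v h - y h) := by rw [one_mul]; abel
  rw [e]
  refine (norm_add_le _ _).trans ((add_le_add key h1).trans ?_)
  have : 0 ≤ h ^ (2 * s + 1) := by positivity
  rw [← hK]
  linarith

end core


/-- Corollary 1 of the paper.  Let `y` solve the Hamiltonian system
`y' = J ∇H(y)`, `y(0) = y₀`, and for `h ∈ (0, h₀]` let `σ_h ∈ Π_s` satisfy `σ_h(0) = y₀` and
`σ_h'(ch) = ∑_{j<s} P_j(c) γ_j(h)`, `γ_j(h) = η_j(h) J ∫₀¹ P_j(τ)∇H(σ_h(τh)) dτ`, where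
`η_j(h) = 1` for `j ≤ s-ν-1` and `η_j(h) = 1 - h^{2(s-1-j)} α_j(h)` with `α_j(h) = O(h²)`
otherwise.  If the `σ_h` stay in a fixed compact set, then `‖σ_h(h) - y(h)‖ = O(h^{2s+1})`. -/
theorem stmt6 (m : ℕ) (hm : 1 ≤ m)
    (H : ESp m → ℝ) (hH : ContDiff ℝ (⊤ : ℕ∞) H)
    (h₀ : ℝ) (hh₀ : 0 < h₀)
    (y₀ : ESp m) (y : ℝ → ESp m) (hy0 : y 0 = y₀)
    (hy : ∀ t ∈ Set.Icc 0 h₀,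
      HasDerivAt y (Matrix.toEuclideanLin (Jmat m) (gradient H (y t))) t)
    (s ν : ℕ) (hν : 1 ≤ ν) (hνs : ν < s)
    (σ : ℝ → ℝ → ESp m)
    (α : ℕ → ℝ → ℝ)
    (hα : ∀ j, s - ν ≤ j → j ≤ s - 1 →
      ∃ C > (0:ℝ), ∃ h₁ > (0:ℝ), ∀ h : ℝ, 0 < h → h ≤ h₁ → |α j h| ≤ C * h ^ 2)
    (η : ℕ → ℝ → ℝ)
    (hη₁ : ∀ j, j ≤ s - ν - 1 → ∀ h : ℝ, η j h = 1)
    (hη₂ : ∀ j, s - ν ≤ j → j ≤ s - 1 → ∀ h : ℝ,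
      η j h = 1 - h ^ (2 * (s - 1 - j)) * α j h)
    (hσ₀ : ∀ h ∈ Set.Ioc (0:ℝ) h₀, σ h 0 = y₀)
    (hσpoly : ∀ h ∈ Set.Ioc (0:ℝ) h₀,
      ∃ a : Fin (s + 1) → ESp m, ∀ t : ℝ, σ h t = ∑ i : Fin (s + 1), t ^ (i : ℕ) • a i)
    (hσ' : ∀ h ∈ Set.Ioc (0:ℝ) h₀, ∀ c ∈ Set.Icc (0:ℝ) 1,
      HasDerivAt (σ h)
        (∑ j ∈ Finset.range s, legP j c •
          (η j h • Matrix.toEuclideanLin (Jmat m)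
            (∫ τ in (0:ℝ)..1, legP j τ • gradient H (σ h (τ * h)))))
        (c * h))
    (K : Set (ESp m)) (hK : IsCompact K)
    (hσK : ∀ h ∈ Set.Ioc (0:ℝ) h₀, ∀ t ∈ Set.Icc 0 h, σ h t ∈ K) :
    ∃ C > (0:ℝ), ∃ h₁ > (0:ℝ), ∀ h : ℝ, 0 < h → h ≤ min h₀ h₁ →
      ‖σ h h - y h‖ ≤ C * h ^ (2 * s + 1) := by
  classical
  have hs1 : 1 ≤ s := by omega
  set Jc : ESp m →L[ℝ] ESp m :=
    LinearMap.toContinuousLinearMap (Matrix.toEuclideanLin (Jmat m)) with hJc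
  have hJ : ∀ z, Matrix.toEuclideanLin (Jmat m) z = Jc z := fun z => rfl
  have hgrad : ContDiff ℝ (⊤ : ℕ∞) (gradient H) := by
    unfold gradient
    exact (InnerProductSpace.toDual ℝ (ESp m)).symm.toContinuousLinearEquiv.contDiff.comp
      (hH.fderiv_right (by simp))
  have hf₀ : ContDiff ℝ (⊤ : ℕ∞) (fun z => Jc (gradient H z)) := Jc.contDiff.comp hgrad
  have hycont : ContinuousOn y (Set.Icc 0 h₀) := fun t ht =>
    (hy t ht).continuousAt.continuousWithinAt
  have hcomp : IsCompact (K ∪ y '' Set.Icc 0 h₀) := hK.union (isCompact_Icc.image_of_continuousOn hycont)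
  obtain ⟨R, hR0, hR⟩ := hcomp.isBounded.subset_closedBall_lt 0 (0 : ESp m)
  let χ : ContDiffBump (0 : ESp m) := ⟨R, R + 1, hR0, by linarith⟩
  set f : ESp m → ESp m := fun z => χ z • Jc (gradient H z) with hfdef
  have hf : ContDiff ℝ (⊤ : ℕ∞) f := χ.contDiff.smul hf₀
  have hfc : HasCompactSupport f := χ.hasCompactSupport.smul_right
  have hb : ∀ k : ℕ, ∃ C : ℝ, ∀ x, ‖iteratedFDeriv ℝ k f x‖ ≤ C := fun k =>
    Continuous.bounded_above_of_compact_support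
      (hf.continuous_iteratedFDeriv (by exact_mod_cast le_top)) (hfc.iteratedFDeriv k)
  have hfeq : ∀ z ∈ K ∪ y '' Set.Icc 0 h₀, f z = Jc (gradient H z) := by
    intro z hz
    have : χ z = 1 := χ.one_of_mem_closedBall (hR hz)
    simp [hfdef, this]
  -- uniform constants for the coefficients
  have hα2 : ∀ j, ∃ C > (0:ℝ), ∃ h₁ > (0:ℝ), s - ν ≤ j → j ≤ s - 1 →
      ∀ h : ℝ, 0 < h → h ≤ h₁ → |α j h| ≤ C * h ^ 2 := by
    intro j
    by_cases hj : s - ν ≤ j ∧ j ≤ s - 1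
    · obtain ⟨C, hC, h₁, hh₁, hq⟩ := hα j hj.1 hj.2
      exact ⟨C, hC, h₁, hh₁, fun _ _ => hq⟩
    · exact ⟨1, one_pos, 1, one_pos, fun a b => absurd ⟨a, b⟩ hj⟩
  choose Cα hCα hα' hhα hαb using hα2
  obtain ⟨T₁, hT₁0, hT₁⟩ : ∃ T₁ > (0:ℝ), ∀ j < s, T₁ ≤ hα' j := by
    clear * - hhα
    induction s with
    | zero => exact ⟨1, one_pos, by simp⟩
    | succ n ih =>
      obtain ⟨T, hT, hT'⟩ := ih
      refine ⟨min T (hα' n), lt_min hT (hhα n), fun j hj => ?_⟩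
      rcases Nat.lt_succ_iff_lt_or_eq.1 hj with hj | rfl
      · exact (min_le_left _ _).trans (hT' j hj)
      · exact min_le_right _ _
  set T : ℝ := min h₀ (min 1 T₁) with hTdef
  have hT0 : 0 < T := lt_min hh₀ (lt_min one_pos hT₁0)
  have hTh : T ≤ h₀ := min_le_left _ _
  have hT1 : T ≤ 1 := (min_le_right _ _).trans (min_le_left _ _)
  have hTT : T ≤ T₁ := (min_le_right _ _).trans (min_le_right _ _)
  set Cη : ℝ := ∑ j ∈ Finset.range s, Cα j with hCηdef
  have hCη : 0 ≤ Cη := Finset.sum_nonneg fun j _ => (hCα j).le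
  have hη : ∀ h ∈ Set.Ioc 0 T, ∀ j < s, |1 - η j h| ≤ Cη * h ^ (2 * (s - j)) := by
    intro h hh j hj
    have hh0 : 0 < h := hh.1
    by_cases hjν : j ≤ s - ν - 1
    · rw [hη₁ j hjν h, sub_self, abs_zero]; positivity
    · have h1 : s - ν ≤ j := by omega
      have h2 : j ≤ s - 1 := by omega
      have h3 := hαb j h1 h2 h hh0 (hh.2.trans (hTT.trans (hT₁ j hj)))
      have h4 : Cα j ≤ Cη :=
        Finset.single_le_sum (f := Cα) (fun i _ => (hCα i).le) (Finset.mem_range.2 hj)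
      rw [hη₂ j h1 h2 h, sub_sub_cancel, abs_mul, abs_of_nonneg (by positivity)]
      have h5 : 2 * (s - j) = 2 * (s - 1 - j) + 2 := by omega
      rw [h5, pow_add]
      calc h ^ (2 * (s - 1 - j)) * |α j h| ≤ h ^ (2 * (s - 1 - j)) * (Cη * h ^ 2) := by
            gcongr
            exact h3.trans (by gcongr)
        _ = _ := by ring
  -- the global extension of the numerical solution
  set γ : ℕ → ℝ → ESp m := fun j h => η j h • Matrix.toEuclideanLin (Jmat m)
      (∫ τ in (0:ℝ)..1, legP j τ • gradient H (σ h (τ * h))) with hγ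
  set u : ℝ → ℝ → ESp m := fun h c =>
    y₀ + h • ∑ j ∈ Finset.range s, (∫ t in (0:ℝ)..c, legP j t) • γ j h with hudef
  have hud : ∀ h c, HasDerivAt (u h) (h • ∑ j ∈ Finset.range s, legP j c • γ j h) c := by
    intro h c
    refine HasDerivAt.const_add _ (HasDerivAt.const_smul h ?_)
    refine HasDerivAt.fun_sum fun j _ => HasDerivAt.smul_const ?_ _
    exact ((legP_cont j).integral_hasStrictDerivAt 0 c).hasDerivAt
  have hueq : ∀ h ∈ Set.Ioc 0 T, ∀ c ∈ Set.Icc (0:ℝ) 1, u h c = σ h (c * h) := by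
    intro h hh c hc
    have hhI : h ∈ Set.Ioc 0 h₀ := ⟨hh.1, hh.2.trans hTh⟩
    have := mvt_zero (φ := fun c => u h c - σ h (c * h)) (φ' := fun _ => 0) (T := 1) (C := 0)
      (k := 0) le_rfl (by simp [hudef, hσ₀ h hhI])
      (by
        intro t ht
        have h1 : HasDerivAt (fun c : ℝ => c * h) h t := by
          simpa using (hasDerivAt_id' t).mul_const h
        have h2 := HasDerivAt.scomp (g₁ := σ h) (h := fun c : ℝ => c * h) t (hσ' h hhI t ht) h1
        have h3 := (hud h t).sub h2
        rw [sub_self] at h3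
        exact h3)
      (by simp) c hc
    rw [zero_mul] at this
    exact sub_eq_zero.1 (norm_le_zero_iff.1 this)
  have hu : ∀ h ∈ Set.Ioc 0 T, ∀ c, HasDerivAt (u h) (h • ∑ j ∈ Finset.range s,
      legP j c • (η j h • ∫ t in (0:ℝ)..1, legP j t • f (u h t))) c := by
    intro h hh c
    have hhI : h ∈ Set.Ioc 0 h₀ := ⟨hh.1, hh.2.trans hTh⟩
    obtain ⟨a, ha⟩ := hσpoly h hhI
    have hσc : Continuous (σ h) := by
      have : σ h = fun t => ∑ i : Fin (s + 1), t ^ (i : ℕ) • a i := funext ha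
      rw [this]; fun_prop
    have hkey : ∀ j, ∫ t in (0:ℝ)..1, legP j t • f (u h t) =
        Matrix.toEuclideanLin (Jmat m)
          (∫ τ in (0:ℝ)..1, legP j τ • gradient H (σ h (τ * h))) := by
      intro j
      have hc1 : Continuous fun τ : ℝ => legP j τ • gradient H (σ h (τ * h)) :=
        (legP_cont j).smul (hgrad.continuous.comp (hσc.comp (by fun_prop)))
      rw [hJ, ← Jc.intervalIntegral_comp_comm (hc1.intervalIntegrable 0 1)]
      refine intervalIntegral.integral_congr fun t ht => ?_
      rw [Set.uIcc_of_le zero_le_one] at ht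
      have hmem : σ h (t * h) ∈ K := hσK h hhI _
        ⟨mul_nonneg ht.1 hh.1.le, mul_le_of_le_one_left hh.1.le ht.2⟩
      rw [hueq h hh t ht, hfeq _ (Or.inl hmem), map_smul]
    have := hud h c
    simp only [hkey]
    exact this
  have hyf : ∀ t ∈ Set.Icc 0 T, HasDerivAt y (f (y t)) t := by
    intro t ht
    have ht' : t ∈ Set.Icc 0 h₀ := ⟨ht.1, ht.2.trans hTh⟩
    rw [hfeq _ (Or.inr ⟨t, ht', rfl⟩)]
    exact hy t ht'
  obtain ⟨C, hC, h₁, hh₁, hfin⟩ := core_est hf hb hT1 hyf hCη hη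
    (fun h _ => by simp [hudef, hy0]) hu
  refine ⟨C, hC, min T h₁, lt_min hT0 hh₁, fun h hh hle => ?_⟩
  have h1 : h ≤ min T h₁ := hle.trans (min_le_right _ _)
  have h2 := hfin h hh h1
  rwa [hueq h ⟨hh, h1.trans (min_le_left _ _)⟩ 1 (by simp), one_mul] at h2
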